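/- arXiv:2006.04672 — 2 statements merged into one kernel-verified Lean document; each statement's English description precedes it below -/
import Mathlib

section
/- Let X be a nonempty set, ℓ : X × X → [0,∞) a dissimilarity function, and f : X → ℝ a bounded function with f* = sup_{x∈X} f(x), satisfying the weak-Lipschitz condition: f* − f(y) ≤ f* − f(x) + max{f* − f(x), ℓ(x,y)} for all x, y ∈ X. Let P ⊆ X be a nonempty subset with diameter at most δ > 0, i.e. ℓ(x,y) ≤ δ for all x, y ∈ P, and suppose that f* − sup_{x∈P} f(x) ≤ c·δ for some constant c ≥ 0. Then every y ∈ P satisfies f* − f(y) ≤ max{2c, c+1}·δ. -/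
/-- Lemma 3 of Bubeck et al.: under the weak-Lipschitz condition, if a nonempty
set `P` of diameter at most `δ` has suboptimality gap `f* − sup_{x∈P} f(x) ≤ c·δ`, then every
arm in `P` is `max{2c, c+1}·δ`-optimal. -/
theorem stmt6 {X : Type*} [Nonempty X]
    (ℓ : X → X → ℝ) (hℓ : ∀ x y, 0 ≤ ℓ x y)
    (f : X → ℝ) (M : ℝ) (hf : ∀ x, |f x| ≤ M)
    (fstar : ℝ) (hfstar : fstar = ⨆ x, f x)
    (hweak : ∀ x y, fstar - f y ≤ fstar - f x + max (fstar - f x) (ℓ x y))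
    (P : Set X) (hP : P.Nonempty) (δ : ℝ) (hδ : 0 < δ)
    (hdiam : ∀ x ∈ P, ∀ y ∈ P, ℓ x y ≤ δ)
    (c : ℝ) (hc : 0 ≤ c)
    (hgap : fstar - sSup (f '' P) ≤ c * δ) :
    ∀ y ∈ P, fstar - f y ≤ max (2 * c) (c + 1) * δ := by
  intro y hy
  apply le_of_forall_pos_le_add
  intro ε hε
  obtain ⟨_, ⟨x, hx, rfl⟩, hlt⟩ :=
    exists_lt_of_lt_csSup (hP.image f) (show sSup (f '' P) - ε / 2 < sSup (f '' P) by linarith)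
  have h1 := hweak x y
  have h2 := hdiam x hx y hy
  have h3 : 2 * c * δ ≤ max (2 * c) (c + 1) * δ :=
    mul_le_mul_of_nonneg_right (le_max_left _ _) hδ.le
  have h4 : (c + 1) * δ ≤ max (2 * c) (c + 1) * δ :=
    mul_le_mul_of_nonneg_right (le_max_right _ _) hδ.le
  rcases max_cases (fstar - f x) (ℓ x y) with ⟨h, _⟩ | ⟨h, _⟩ <;> rw [h] at h1 <;> linarith
end

section
/- Let X be a nonempty set, ℓ : X × X → [0,∞) a dissimilarity function, and (P_{h,i}), h ≥ 0, 1 ≤ i ≤ 2^h, a tree of coverings of X: P_{0,1} = X and P_{h,i} = P_{h+1,2i−1} ∪ P_{h+1,2i} for all h ≥ 0 and 1 ≤ i ≤ 2^h. Suppose there are constants ν₁ ≥ ν₂ > 0 and ρ ∈ (0,1) such that for all h ≥ 0: (a) ℓ(x,y) ≤ ν₁ρ^h for all x, y ∈ P_{h,i} and all 1 ≤ i ≤ 2^h; (b) for each 1 ≤ i ≤ 2^h there exists x°_{h,i} ∈ P_{h,i} with the ℓ-open ball B_{h,i} = B(x°_{h,i}, ν₂ρ^h) contained in P_{h,i}; (c)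 B_{h,i} ∩ B_{h,j} = ∅ for all 1 ≤ i < j ≤ 2^h. Let f : X → ℝ be bounded with f* = sup_{x∈X} f(x), satisfying the weak-Lipschitz condition: f* − f(y) ≤ f* − f(x) + max{f* − f(x), ℓ(x,y)} for all x, y ∈ X. For ε > 0 let X_ε = {x ∈ X : f(x) ≥ f* − ε}, and for h ≥ 0 let I_h = {i : 1 ≤ i ≤ 2^h, sup_{x∈P_{h,i}} f(x) ≥ f* − 2ν₁ρ^h}. Let d = max{0, limsup_{ε→0⁺} (ln N(X_{(4ν₁/ν₂)·ε}, ℓ, ε))/ln(1/ε)} be the 4ν₁/ν₂-near-optimality dimension of f, and let d' > d. Then there exists a constant C > 0 such that |I_h| ≤ C·(ν₂ρ^h)^{−d'} for all h ≥ 0. -/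
open Filter

/-- The `ℓ`-open ball of center `x` and radius `ε` for a dissimilarity function `ℓ`. -/
def dissimBall {X : Type*} (ℓ : X → X → ℝ) (x : X) (ε : ℝ) : Set X :=
  {y | ℓ x y < ε}

/-- The `ε`-packing number of `Y ⊆ X` w.r.t. the dissimilarity `ℓ`: the largest integer `k`
such that there exist `k` pairwise disjoint `ℓ`-open balls of radius `ε` contained in `Y`. -/
noncomputable def packingNumber {X : Type*} (ℓ : X → X → ℝ) (Y : Set X) (ε : ℝ) : ℕ :=
  sSup {k : ℕ | ∃ c : Fin k → X,
    (∀ j, dissimBall ℓ (c j) ε ⊆ Y) ∧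
    (∀ j j', j ≠ j' → Disjoint (dissimBall ℓ (c j) ε) (dissimBall ℓ (c j') ε))}

/-- Lemma `I_h` bound: under the tree-of-coverings assumptions (a)–(c) and the
weak-Lipschitz condition, the number `|I_h|` of `2ν₁ρ^h`-optimal nodes at depth `h` satisfies
`|I_h| ≤ C (ν₂ ρ^h)^{−d'}` for every `d'` larger than the `4ν₁/ν₂`-near-optimality
dimension `d` of `f`. -/
theorem stmt9 {X : Type*} [Nonempty X]
    (ℓ : X → X → ℝ) (hℓ : ∀ x y, 0 ≤ ℓ x y)
    (P : ℕ → ℕ → Set X)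
    (hroot : P 0 1 = Set.univ)
    (hsplit : ∀ h i : ℕ, 1 ≤ i → i ≤ 2 ^ h →
      P h i = P (h + 1) (2 * i - 1) ∪ P (h + 1) (2 * i))
    (ν₁ ν₂ ρ : ℝ) (hν₂ : 0 < ν₂) (hν₁₂ : ν₂ ≤ ν₁) (hρ0 : 0 < ρ) (hρ1 : ρ < 1)
    (ha : ∀ h i : ℕ, 1 ≤ i → i ≤ 2 ^ h →
      ∀ x ∈ P h i, ∀ y ∈ P h i, ℓ x y ≤ ν₁ * ρ ^ h)
    (x₀ : ℕ → ℕ → X)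
    (hb : ∀ h i : ℕ, 1 ≤ i → i ≤ 2 ^ h →
      x₀ h i ∈ P h i ∧ dissimBall ℓ (x₀ h i) (ν₂ * ρ ^ h) ⊆ P h i)
    (hc : ∀ h i j : ℕ, 1 ≤ i → i < j → j ≤ 2 ^ h →
      Disjoint (dissimBall ℓ (x₀ h i) (ν₂ * ρ ^ h)) (dissimBall ℓ (x₀ h j) (ν₂ * ρ ^ h)))
    (f : X → ℝ) (M : ℝ) (hf : ∀ x, |f x| ≤ M)
    (fstar : ℝ) (hfstar : fstar = ⨆ x, f x)
    (hweak : ∀ x y, fstar - f y ≤ fstar - f x + max (fstar - f x) (ℓ x y))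
    (Xe : ℝ → Set X) (hXe : ∀ ε : ℝ, Xe ε = {x | f x ≥ fstar - ε})
    (I : ℕ → Finset ℕ)
    (hI : ∀ h : ℕ, I h = (Finset.Icc 1 (2 ^ h)).filter
      (fun i => sSup (f '' P h i) ≥ fstar - 2 * ν₁ * ρ ^ h))
    (d : EReal)
    (hd : d = max 0 (Filter.limsup
      (fun ε : ℝ =>
        ((Real.log (packingNumber ℓ (Xe (4 * ν₁ / ν₂ * ε)) ε) / Real.log (1 / ε) : ℝ) : EReal))
      (nhdsWithin 0 (Set.Ioi 0))))
    (d' : ℝ) (hd' : d < (d' : EReal)) :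
    ∃ C : ℝ, 0 < C ∧ ∀ h : ℕ, ((I h).card : ℝ) ≤ C * (ν₂ * ρ ^ h) ^ (-d') := by
  -- covering at every depth
  have hcov : ∀ h : ℕ, ∀ x : X, ∃ i, 1 ≤ i ∧ i ≤ 2 ^ h ∧ x ∈ P h i := by
    intro h
    induction h with
    | zero => intro x; exact ⟨1, le_refl _, by simp, by rw [hroot]; trivial⟩
    | succ n ih =>
      intro x
      obtain ⟨i, h1, h2, hx⟩ := ih x
      rw [hsplit n i h1 h2] at hx
      rcases hx with hx | hx
      · exact ⟨2 * i - 1, by omega, by rw [pow_succ]; omega, hx⟩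
      · exact ⟨2 * i, by omega, by rw [pow_succ]; omega, hx⟩
  have hν₁ : 0 < ν₁ := lt_of_lt_of_le hν₂ hν₁₂
  have hsmall : ∀ ε : ℝ, 0 < ε → ∃ h : ℕ, ν₁ * ρ ^ h < ε := by
    intro ε hε
    obtain ⟨h, hh⟩ := exists_pow_lt_of_lt_one (div_pos hε hν₁) hρ1
    refine ⟨h, ?_⟩
    rw [lt_div_iff₀ hν₁] at hh
    linarith
  -- packing sets are bounded
  have hbdd : ∀ (Y : Set X) (ε : ℝ), 0 < ε → BddAbove {k : ℕ | ∃ c : Fin k → X,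
      (∀ j, dissimBall ℓ (c j) ε ⊆ Y) ∧
      (∀ j j', j ≠ j' → Disjoint (dissimBall ℓ (c j) ε) (dissimBall ℓ (c j') ε))} := by
    intro Y ε hε
    obtain ⟨h, hh⟩ := hsmall ε hε
    refine ⟨2 ^ h, ?_⟩
    rintro k ⟨c, -, hdis⟩
    choose g hg1 hg2 hg3 using fun j => hcov h (c j)
    have hinj : Function.Injective g := by
      intro j j' hjj
      by_contra hne
      have hdj := Set.disjoint_left.mp (hdis j j' hne)
      refine @hdj (c j) ?_ ?_
      · exact lt_of_le_of_lt (ha h (g j) (hg1 j) (hg2 j) _ (hg3 j) _ (hg3 j)) hh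
      · exact lt_of_le_of_lt
          (ha h (g j) (hg1 j) (hg2 j) _ (by rw [hjj]; exact hg3 j') _ (hg3 j)) hh
    have hcard := Finset.card_le_card_of_injOn (s := (Finset.univ : Finset (Fin k)))
      (t := Finset.Icc 1 (2 ^ h)) g
      (fun j _ => by simpa using ⟨hg1 j, hg2 j⟩) (hinj.injOn)
    simpa using hcard
  have hεpos : ∀ h : ℕ, 0 < ν₂ * ρ ^ h := fun h => mul_pos hν₂ (pow_pos hρ0 h)
  -- the number of near-optimal nodes is at most the packing number
  have hpack : ∀ h : ℕ, (I h).card ≤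
      packingNumber ℓ (Xe (4 * ν₁ / ν₂ * (ν₂ * ρ ^ h))) (ν₂ * ρ ^ h) := by
    intro h
    refine le_csSup (hbdd _ _ (hεpos h)) ?_
    have hmem : ∀ j : Fin (I h).card, 1 ≤ (((I h).equivFin.symm j : I h) : ℕ) ∧
        (((I h).equivFin.symm j : I h) : ℕ) ≤ 2 ^ h ∧
        sSup (f '' P h ((I h).equivFin.symm j : I h)) ≥ fstar - 2 * ν₁ * ρ ^ h := by
      intro j
      have hm := ((I h).equivFin.symm j).2
      generalize (((I h).equivFin.symm j : I h) : ℕ) = i at hm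
      rw [hI, Finset.mem_filter, Finset.mem_Icc] at hm
      exact ⟨hm.1.1, hm.1.2, hm.2⟩
    refine ⟨fun j => x₀ h ((I h).equivFin.symm j : I h), ?_, ?_⟩
    · intro j
      obtain ⟨h1, h2, h3⟩ := hmem j
      intro y hy
      beta_reduce at hy
      generalize (((I h).equivFin.symm j : I h) : ℕ) = i at h1 h2 h3 hy
      have hyP := (hb h i h1 h2).2 hy
      rw [hXe]
      have e : 4 * ν₁ / ν₂ * (ν₂ * ρ ^ h) = 4 * ν₁ * ρ ^ h := by
        field_simp
      rw [e]
      change fstar - 4 * ν₁ * ρ ^ h ≤ f y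
      refine le_of_forall_pos_le_add fun δ hδ => ?_
      have hne : (f '' P h i).Nonempty := ⟨_, _, (hb h i h1 h2).1, rfl⟩
      obtain ⟨_, ⟨x, hx, rfl⟩, hlt⟩ := exists_lt_of_lt_csSup hne
        (show fstar - 2 * ν₁ * ρ ^ h - δ / 2 < sSup (f '' P h i) by linarith)
      have hw := hweak x y
      have hl := ha h i h1 h2 x hx y hyP
      have hp : 0 < ν₁ * ρ ^ h := mul_pos hν₁ (pow_pos hρ0 h)
      have hmax : max (fstar - f x) (ℓ x y) ≤ 2 * ν₁ * ρ ^ h + δ / 2 :=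
        max_le (by linarith) (by linarith)
      linarith
    · intro j j' hjj
      obtain ⟨h1, h2, -⟩ := hmem j
      obtain ⟨h1', h2', -⟩ := hmem j'
      have hne : (((I h).equivFin.symm j : I h) : ℕ) ≠ ((I h).equivFin.symm j' : I h) := by
        intro hh
        exact hjj ((I h).equivFin.symm.injective (Subtype.ext hh))
      rcases lt_or_gt_of_ne hne with hlt | hlt
      · exact hc h _ _ h1 hlt h2'
      · exact (hc h _ _ h1' hlt h2).symm
  -- eventual bound from the limsup
  have hlim := lt_of_le_of_lt (le_max_right _ _) (hd ▸ hd')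
  have hev := eventually_lt_of_limsup_lt hlim
  have hlt1 : ∀ᶠ ε : ℝ in nhdsWithin 0 (Set.Ioi 0), ε < 1 :=
    nhdsWithin_le_nhds (Iio_mem_nhds one_pos)
  have htend : Tendsto (fun h : ℕ => ν₂ * ρ ^ h) atTop (nhdsWithin 0 (Set.Ioi 0)) := by
    refine tendsto_nhdsWithin_iff.mpr ⟨?_, Eventually.of_forall hεpos⟩
    simpa using (tendsto_pow_atTop_nhds_zero_of_lt_one hρ0.le hρ1).const_mul ν₂
  obtain ⟨H, hH⟩ := eventually_atTop.mp (htend.eventually (hev.and hlt1))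
  have hrp : ∀ h : ℕ, 0 < (ν₂ * ρ ^ h) ^ (-d') := fun h => Real.rpow_pos_of_pos (hεpos h) _
  have hnn : ∀ h : ℕ, 0 ≤ ((I h).card : ℝ) / (ν₂ * ρ ^ h) ^ (-d') :=
    fun h => div_nonneg (Nat.cast_nonneg _) (hrp h).le
  refine ⟨1 + ∑ h ∈ Finset.range H, ((I h).card : ℝ) / (ν₂ * ρ ^ h) ^ (-d'), ?_, ?_⟩
  · have := Finset.sum_nonneg (fun h (_ : h ∈ Finset.range H) => hnn h)
    linarith
  · intro h
    have hS := Finset.sum_nonneg (fun h (_ : h ∈ Finset.range H) => hnn h)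
    rw [← div_le_iff₀ (hrp h)]
    by_cases hh : h < H
    · have := Finset.single_le_sum (fun h (_ : h ∈ Finset.range H) => hnn h)
        (Finset.mem_range.mpr hh)
      linarith
    · obtain ⟨hb1, hb2⟩ := hH h (not_lt.mp hh)
      suffices hs : ((I h).card : ℝ) / (ν₂ * ρ ^ h) ^ (-d') ≤ 1 by linarith
      rw [div_le_one (hrp h)]
      refine le_trans (Nat.cast_le.mpr (hpack h)) ?_
      have hb3 := EReal.coe_lt_coe_iff.mp hb1
      have hε := hεpos h
      generalize packingNumber ℓ (Xe (4 * ν₁ / ν₂ * (ν₂ * ρ ^ h))) (ν₂ * ρ ^ h) = N at hb3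
      have hr := hrp h
      generalize ν₂ * ρ ^ h = ε at *
      rcases Nat.eq_zero_or_pos N with rfl | hN
      · simpa using hr.le
      have hlog : 0 < Real.log (1 / ε) := Real.log_pos (by rw [lt_div_iff₀ hε]; linarith)
      rw [div_lt_iff₀ hlog] at hb3
      rw [← Real.log_le_log_iff (by exact_mod_cast hN) hr, Real.log_rpow hε]
      rw [one_div, Real.log_inv] at hb3
      linarith
end
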